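/- For 0 < λ = n/m ≤ 1/2 and τ = t/n fixed, the capacity of the additive-multiplicative matrix channel satisfies lim_{q→∞} C = (m-n)(n-t) (for fixed n, m, t), and lim_{m→∞, n=λm, t=τn} C/(nm) = (1-λ)(1-τ). -/

import Mathlib

open scoped BigOperators

/-- Mutual information (logarithm base `b`) between the input and output of a discrete
memoryless channel with finite input alphabet `α`, finite output alphabet `β`, transition
probabilities `K` and input distribution `p`. -/
noncomputable def mutualInfoB {α β : Type*} [Fintype α] [Fintype β]
    (b : ℝ) (p : α → ℝ) (K : α → β → ℝ) : ℝ :=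
  ∑ x : α, ∑ y : β, p x * K x y *
    Real.logb b (K x y / ∑ x' : α, p x' * K x' y)

/-- The capacity (in base-`b` units) of a discrete channel with transition probabilities `K`:
the supremum of the mutual information over all input distributions. -/
noncomputable def capacityB {α β : Type*} [Fintype α] [Fintype β]
    (b : ℝ) (K : α → β → ℝ) : ℝ :=
  sSup {c : ℝ | ∃ p : α → ℝ, (∀ x, 0 ≤ p x) ∧ (∑ x : α, p x) = 1 ∧ c = mutualInfoB b p K}


/-- Transition probabilities of the additive-multiplicative matrix channel `Y = A(X + W)`,
where `A` is uniform over `GL_n(F_q)` and `W` is uniform over the `n × m` matrices of rank `t`,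
independent of each other and of `X`. -/
noncomputable def ammcKernel (F : Type) [Field F] [Fintype F] (n m t : ℕ)
    (X Y : Matrix (Fin n) (Fin m) F) : ℝ :=
  (Nat.card {p : Matrix.GeneralLinearGroup (Fin n) F ×
        {W : Matrix (Fin n) (Fin m) F // W.rank = t} //
      (p.1 : Matrix (Fin n) (Fin n) F) * (X + (p.2 : Matrix (Fin n) (Fin m) F)) = Y} : ℝ) /
    ((Nat.card (Matrix.GeneralLinearGroup (Fin n) F) : ℝ) *
      (Nat.card {W : Matrix (Fin n) (Fin m) F // W.rank = t} : ℝ))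


/-- The capacity (in `q`-ary units) of the additive-multiplicative matrix channel
`Y = A(X + W)` over `F_q` with `n × m` matrices and `rank W = t`. -/
noncomputable def ammcCapacity (F : Type) [Field F] [Fintype F] (n m t : ℕ) : ℝ :=
  capacityB (Fintype.card F) (ammcKernel F n m t)

section MutualInformation

variable {α β : Type*} [Fintype α] [Fintype β] {b : ℝ} {p : α → ℝ} {K : α → β → ℝ}

/-- If every row of the channel is dominated by `M` times a fixed output (sub)distribution, then
the mutual information is at most `log M`. -/
lemma mutualInfoB_le_logb (hb : 1 < b) (hp : ∀ x, 0 ≤ p x) (hp1 : ∑ x, p x = 1)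
    (hK : ∀ x y, 0 ≤ K x y) (hK1 : ∀ x, ∑ y, K x y = 1) {Q : β → ℝ} (hQ : ∀ y, 0 ≤ Q y)
    (hQ1 : ∑ y, Q y ≤ 1) {M : ℝ} (hM : 0 < M) (hKM : ∀ x y, K x y ≤ M * Q y) :
    mutualInfoB b p K ≤ Real.logb b M := by
  have hlb : 0 < Real.log b := Real.log_pos hb
  set S : β → ℝ := fun y => ∑ x', p x' * K x' y with hS
  have hS0 : ∀ y, 0 ≤ S y := fun y => Finset.sum_nonneg fun x _ => mul_nonneg (hp x) (hK x y)
  have key : ∀ x y, p x * K x y * Real.logb b (K x y / S y) ≤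
      p x * K x y * Real.logb b M + (p x * K x y / S y * Q y - p x * K x y) / Real.log b := by
    intro x y
    rcases (mul_nonneg (hp x) (hK x y)).eq_or_lt with h0 | hpos
    · simp [← h0]
    have hKpos : 0 < K x y := pos_of_mul_pos_right hpos (hp x)
    have hSpos : 0 < S y := hpos.trans_le
      (Finset.single_le_sum (f := fun x' => p x' * K x' y)
        (fun x' _ => mul_nonneg (hp x') (hK x' y)) (Finset.mem_univ x))
    have hQpos : 0 < Q y := pos_of_mul_pos_right (hKpos.trans_le (hKM x y)) hM.le
    have h1 : Real.log (K x y / S y) ≤ Real.log M + (Q y / S y - 1) := by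
      calc Real.log (K x y / S y) ≤ Real.log (M * (Q y / S y)) := by
            apply Real.log_le_log (by positivity)
            rw [← mul_div_assoc]; gcongr; exact hKM x y
        _ = Real.log M + Real.log (Q y / S y) := Real.log_mul hM.ne' (by positivity)
        _ ≤ _ := by gcongr; exact Real.log_le_sub_one_of_pos (by positivity)
    calc p x * K x y * Real.logb b (K x y / S y)
        = p x * K x y * Real.log (K x y / S y) / Real.log b := by rw [Real.logb]; ring
      _ ≤ p x * K x y * (Real.log M + (Q y / S y - 1)) / Real.log b := by gcongr
      _ = _ := by rw [Real.logb]; ring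
  have hsum : ∑ x, ∑ y, p x * K x y = 1 := by
    simp_rw [← Finset.mul_sum, hK1, mul_one, hp1]
  have hsum2 : ∑ x, ∑ y, p x * K x y / S y * Q y ≤ 1 := by
    rw [Finset.sum_comm]
    refine le_trans (Finset.sum_le_sum fun y _ => ?_) hQ1
    rw [← Finset.sum_mul, ← Finset.sum_div]
    exact mul_le_of_le_one_left (hQ y) (div_self_le_one _)
  calc mutualInfoB b p K ≤ ∑ x, ∑ y, (p x * K x y * Real.logb b M +
        (p x * K x y / S y * Q y - p x * K x y) / Real.log b) :=
        Finset.sum_le_sum fun x _ => Finset.sum_le_sum fun y _ => key x y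
    _ = Real.logb b M + (∑ x, ∑ y, p x * K x y / S y * Q y - 1) / Real.log b := by
        simp_rw [Finset.sum_add_distrib, ← Finset.sum_div, Finset.sum_sub_distrib,
          ← Finset.sum_mul, hsum, one_mul]
    _ ≤ Real.logb b M := by
        have : (∑ x, ∑ y, p x * K x y / S y * Q y - 1) / Real.log b ≤ 0 :=
          div_nonpos_of_nonpos_of_nonneg (by linarith) hlb.le
        linarith

open Classical in
/-- A lower bound for the mutual information through an auxiliary reverse channel `V`: if `V`
exceeds half the input distribution everywhere, and exceeds it by the factor `M / 2` on a set of
pairs that has probability at least `1 - δ` for every input in the support, then the mutual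
information is at least `(1 - δ) log M - log 2`. -/
lemma le_mutualInfoB (hb : 1 < b) (hp : ∀ x, 0 ≤ p x) (hp1 : ∑ x, p x = 1)
    (hK : ∀ x y, 0 ≤ K x y) (hK1 : ∀ x, ∑ y, K x y = 1) {V : α → β → ℝ}
    (hV1 : ∀ y, ∑ x, V x y ≤ 1) (good : α → β → Prop) {M δ : ℝ} (hM : 1 ≤ M)
    (hVp : ∀ x y, p x / 2 ≤ V x y) (hVM : ∀ x y, good x y → p x ≠ 0 → p x * M / 2 ≤ V x y)
    (hgood : ∀ x, p x ≠ 0 → 1 - δ ≤ ∑ y, if good x y then K x y else 0) :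
    (1 - δ) * Real.logb b M - Real.logb b 2 ≤ mutualInfoB b p K := by
  have hlb : 0 < Real.log b := Real.log_pos hb
  have hM0 : 0 < M := by linarith
  have hlM : 0 ≤ Real.logb b M := Real.logb_nonneg hb hM
  set S : β → ℝ := fun y => ∑ x', p x' * K x' y with hS
  have hS0 : ∀ y, 0 ≤ S y := fun y => Finset.sum_nonneg fun x _ => mul_nonneg (hp x) (hK x y)
  have hV0 : ∀ x y, 0 ≤ V x y := fun x y => le_trans (by have := hp x; positivity) (hVp x y)
  have key : ∀ x y, p x * ((if good x y then K x y else 0) * Real.logb b M)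
      - p x * K x y * Real.logb b 2 + (p x * K x y - V x y * S y) / Real.log b ≤
      p x * K x y * Real.logb b (K x y / S y) := by
    intro x y
    rcases (mul_nonneg (hp x) (hK x y)).eq_or_lt with h0 | hpos
    · have h1 : p x * ((if good x y then K x y else 0) * Real.logb b M) = 0 := by
        split_ifs
        · rw [← mul_assoc, ← h0, zero_mul]
        · simp
      rw [h1, ← h0]
      have : 0 ≤ V x y * S y / Real.log b :=
        div_nonneg (mul_nonneg (hV0 x y) (hS0 y)) hlb.le
      simp only [zero_mul, zero_sub, sub_zero, neg_div]
      linarith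
    have hKpos : 0 < K x y := pos_of_mul_pos_right hpos (hp x)
    have hppos : 0 < p x := pos_of_mul_pos_left hpos (hK x y)
    have hSpos : 0 < S y := hpos.trans_le
      (Finset.single_le_sum (f := fun x' => p x' * K x' y)
        (fun x' _ => mul_nonneg (hp x') (hK x' y)) (Finset.mem_univ x))
    have hVpos : 0 < V x y := lt_of_lt_of_le (by positivity) (hVp x y)
    have h1 : Real.log (V x y / p x) + (1 - V x y * S y / (p x * K x y)) ≤
        Real.log (K x y / S y) := by
      have h2 := Real.log_le_sub_one_of_pos (x := V x y * S y / (p x * K x y)) (by positivity)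
      have h3 : V x y / p x = (V x y * S y / (p x * K x y)) * (K x y / S y) := by field_simp
      rw [h3, Real.log_mul (by positivity) (by positivity)]
      linarith
    have h4 : (if good x y then Real.log M else 0) - Real.log 2 ≤ Real.log (V x y / p x) := by
      split_ifs with hg
      · rw [← Real.log_div hM0.ne' two_ne_zero]
        apply Real.log_le_log (by positivity)
        rw [le_div_iff₀ hppos]
        have := hVM x y hg hppos.ne'
        linarith
      · rw [zero_sub, ← Real.log_inv]
        apply Real.log_le_log (by positivity)
        rw [le_div_iff₀ hppos]
        have := hVp x y
        linarith
    have h5 := mul_le_mul_of_nonneg_left (add_le_add_left h4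
      (1 - V x y * S y / (p x * K x y))) hpos.le
    have h6 := mul_le_mul_of_nonneg_left h1 hpos.le
    have h7 : p x * K x y * (V x y * S y / (p x * K x y)) = V x y * S y := by field_simp
    have h8 := div_le_div_of_nonneg_right (h5.trans h6) hlb.le
    refine le_trans (le_of_eq ?_) (h8.trans (le_of_eq ?_))
    · rw [mul_add, mul_sub, mul_sub, h7, Real.logb, Real.logb]
      split_ifs <;> ring
    · rw [Real.logb]; ring
  have hsum : ∑ x, ∑ y, p x * K x y = 1 := by
    simp_rw [← Finset.mul_sum, hK1, mul_one, hp1]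
  have hsum2 : ∑ x, ∑ y, V x y * S y ≤ 1 := by
    rw [Finset.sum_comm]
    simp_rw [← Finset.sum_mul]
    calc ∑ y, (∑ x, V x y) * S y ≤ ∑ y, S y :=
          Finset.sum_le_sum fun y _ => mul_le_of_le_one_left (hS0 y) (hV1 y)
      _ = 1 := by rw [hS, Finset.sum_comm]; exact hsum
  have hsum3 : 1 - δ ≤ ∑ x, p x * ∑ y, if good x y then K x y else 0 := by
    calc 1 - δ = ∑ x, p x * (1 - δ) := by rw [← Finset.sum_mul, hp1, one_mul]
      _ ≤ _ := by
        refine Finset.sum_le_sum fun x _ => ?_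
        rcases eq_or_ne (p x) 0 with h | h
        · simp [h]
        · exact mul_le_mul_of_nonneg_left (hgood x h) (hp x)
  refine le_trans ?_ (Finset.sum_le_sum fun x _ => Finset.sum_le_sum fun y _ => key x y)
  have h8 : ∑ x, ∑ y, (p x * ((if good x y then K x y else 0) * Real.logb b M)
      - p x * K x y * Real.logb b 2 + (p x * K x y - V x y * S y) / Real.log b) =
      (∑ x, p x * ∑ y, if good x y then K x y else 0) * Real.logb b M - Real.logb b 2 +
        (1 - ∑ x, ∑ y, V x y * S y) / Real.log b := by
    have h : ∑ x, ∑ y, p x * K x y * Real.logb b 2 = Real.logb b 2 := by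
      simp_rw [← Finset.sum_mul]
      rw [hsum, one_mul]
    simp_rw [Finset.sum_add_distrib, Finset.sum_sub_distrib, ← Finset.sum_div,
      Finset.sum_sub_distrib, hsum, h, Finset.mul_sum, Finset.sum_mul, mul_assoc]
  have h9 : 0 ≤ (1 - ∑ x, ∑ y, V x y * S y) / Real.log b :=
    div_nonneg (by linarith) hlb.le
  have h10 := mul_le_mul_of_nonneg_right hsum3 hlM
  linarith

end MutualInformation

section LinearAlgebra

lemma exists_linearEquiv_apply_eq {F V : Type*} [Field F] [AddCommGroup V] [Module F V]
    [FiniteDimensional F V] {v w : V} (hv : v ≠ 0) (hw : w ≠ 0) : ∃ e : V ≃ₗ[F] V, e v = w := by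
  let e := (LinearEquiv.toSpanNonzeroSingleton F V v hv).symm ≪≫ₗ
    LinearEquiv.toSpanNonzeroSingleton F V w hw
  obtain ⟨g, hg⟩ := Submodule.exists_linearEquiv_restrict_eq e
  refine ⟨g, ?_⟩
  have h := hg ⟨v, Submodule.mem_span_singleton_self v⟩
  rw [← h]
  have h1 : (⟨v, Submodule.mem_span_singleton_self v⟩ : Submodule.span F {v}) =
      LinearEquiv.toSpanNonzeroSingleton F V v hv 1 := by
    ext; simp
  rw [h1, LinearEquiv.trans_apply, LinearEquiv.symm_apply_apply]
  simp

lemma exists_comp_eq_of_ker_le_ker {F U V W : Type*} [Field F] [AddCommGroup U] [AddCommGroup V]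
    [AddCommGroup W] [Module F U] [Module F V] [Module F W] (f : U →ₗ[F] V) (g : U →ₗ[F] W)
    (h : LinearMap.ker f ≤ LinearMap.ker g) : ∃ c : V →ₗ[F] W, c ∘ₗ f = g := by
  obtain ⟨c, hc⟩ := LinearMap.exists_extend
    ((LinearMap.ker f).liftQ g h ∘ₗ f.quotKerEquivRange.symm.toLinearMap)
  refine ⟨c, LinearMap.ext fun u => ?_⟩
  have h1 := LinearMap.congr_fun hc (f.rangeRestrict u)
  have h2 : f.quotKerEquivRange.symm (f.rangeRestrict u) = (LinearMap.ker f).mkQ u := by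
    rw [LinearEquiv.symm_apply_eq]; ext; simp
  simpa [h2] using h1

variable {F : Type*} [Field F]

lemma card_preimage_translate_le {V U : Type*} [AddCommGroup V] [Module F V] [Finite V]
    [AddCommGroup U] [Module F U] [Finite U] (g : V →ₗ[F] U) (x : U) (S : Submodule F U) :
    Nat.card {v // g v - x ∈ S} ≤ Nat.card S * Nat.card (LinearMap.ker g) := by
  rw [← Nat.card_prod]
  let s : ∀ y : S, V := fun y => open Classical in
    if h : ∃ v, g v - x = y then h.choose else 0
  have hs : ∀ v (hv : g v - x ∈ S), g (s ⟨_, hv⟩) = g v := by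
    intro v hv
    have h : ∃ v', g v' - x = g v - x := ⟨v, rfl⟩
    have : s ⟨_, hv⟩ = h.choose := by simp only [s]; rw [dif_pos h]
    rw [this]
    exact sub_left_injective h.choose_spec
  refine Nat.card_le_card_of_injective (fun v => (⟨g v.1 - x, v.2⟩,
    ⟨v.1 - s ⟨g v.1 - x, v.2⟩, by rw [LinearMap.mem_ker, map_sub, hs, sub_self]⟩)) ?_
  rintro ⟨v, hv⟩ ⟨w, hw⟩ h
  simp only [Prod.mk.injEq, Subtype.mk.injEq] at h
  obtain ⟨h1, h2⟩ := h
  have h3 : s ⟨g v - x, hv⟩ = s ⟨g w - x, hw⟩ := by congr 1; exact Subtype.ext h1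
  rw [h3] at h2
  exact Subtype.ext (sub_left_injective h2)

lemma exists_finset_forall_mem_span {V : Type*} [AddCommGroup V] [Module F V] {ι : Type*}
    [Fintype ι] (v : ι → V) :
    ∃ J : Finset ι, J.card = Module.finrank F (Submodule.span F (Set.range v)) ∧
      ∀ i, v i ∈ Submodule.span F (Set.range fun j : J => v j) := by
  classical
  obtain ⟨κ, a, ha, hspan, hli⟩ := exists_linearIndependent' F v
  have : Fintype κ := Fintype.ofInjective a ha
  refine ⟨Finset.univ.image a, ?_, fun i => ?_⟩
  · rw [Finset.card_image_of_injective _ ha, ← hspan, finrank_span_eq_card hli, Finset.card_univ]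
  · have h1 : v i ∈ Submodule.span F (Set.range (v ∘ a)) :=
      hspan ▸ Submodule.subset_span ⟨i, rfl⟩
    refine Submodule.span_mono ?_ h1
    rintro _ ⟨k, rfl⟩
    exact ⟨⟨a k, by simp⟩, rfl⟩

variable [Fintype F]

lemma card_span_range_le {V : Type*} [AddCommGroup V] [Module F V] [Finite V] {ι : Type*}
    [Fintype ι] (v : ι → V) :
    Nat.card (Submodule.span F (Set.range v)) ≤ Fintype.card F ^ Fintype.card ι := by
  rw [Module.natCard_eq_pow_finrank (K := F), Nat.card_eq_fintype_card (α := F)]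
  exact Nat.pow_le_pow_right Fintype.card_pos (finrank_range_le_card v)

/-- A bound for the number of tuples `B` whose vectors `g (B i) - x i` span a space of
dimension `t`. -/
lemma card_finrank_span_eq_le {V U : Type*} [AddCommGroup V] [Module F V] [Finite V]
    [AddCommGroup U] [Module F U] [Finite U] (g : V →ₗ[F] U) {n : ℕ} (x : Fin n → U) (t : ℕ) :
    Nat.card {B : Fin n → V //
        Module.finrank F (Submodule.span F (Set.range fun i => g (B i) - x i)) = t} ≤
      2 ^ n * (Nat.card V ^ t *
        (Fintype.card F ^ t * Nat.card (LinearMap.ker g)) ^ (n - t)) := by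
  classical
  have : Fintype V := Fintype.ofFinite V
  let S : Finset (Fin n) → Finset (Fin n → V) := fun J =>
    Finset.univ.filter fun B => ∀ i : {i // ¬ i ∈ J},
      g (B i) - x i ∈ Submodule.span F (Set.range fun j : {j // j ∈ J} => g (B j) - x j)
  have hS : ∀ J ∈ Finset.powersetCard t Finset.univ, (S J).card ≤
      Nat.card V ^ t * (Fintype.card F ^ t * Nat.card (LinearMap.ker g)) ^ (n - t) := by
    intro J hJ
    have hJ : J.card = t := (Finset.mem_powersetCard.1 hJ).2
    let T : ({j // j ∈ J} → V) → Submodule F U := fun f =>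
      Submodule.span F (Set.range fun j => g (f j) - x j)
    calc (S J).card = Nat.card (S J) := by simp
      _ ≤ Nat.card (Σ f : {j // j ∈ J} → V, ∀ i : {i // ¬ i ∈ J}, {v // g v - x i ∈ T f}) := by
        refine Nat.card_le_card_of_injective (fun B => ⟨fun j => B.1 j,
          fun i => ⟨B.1 i, (Finset.mem_filter.1 B.2).2 i⟩⟩) ?_
        rintro ⟨B, hB⟩ ⟨C, hC⟩ h
        rw [Sigma.mk.injEq] at h
        obtain ⟨h1, h2⟩ := h
        have h3 : ∀ (f f' : {j // j ∈ J} → V) (u : ∀ i : {i // ¬ i ∈ J}, {v // g v - x i ∈ T f})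
            (u' : ∀ i : {i // ¬ i ∈ J}, {v // g v - x i ∈ T f'}), f = f' → HEq u u' →
            ∀ i, (u i : V) = u' i := by
          rintro f _ u _ rfl h i
          rw [eq_of_heq h]
        refine Subtype.ext (funext fun i => ?_)
        by_cases hi : i ∈ J
        · exact congrFun h1 ⟨i, hi⟩
        · exact h3 _ _ _ _ h1 h2 ⟨i, hi⟩
      _ = ∑ f : {j // j ∈ J} → V, ∏ i : {i // ¬ i ∈ J}, Nat.card {v // g v - x i ∈ T f} := by
        rw [Nat.card_sigma]; simp_rw [Nat.card_pi]
      _ ≤ ∑ _f : {j // j ∈ J} → V, ∏ _i : {i // ¬ i ∈ J},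
          (Fintype.card F ^ t * Nat.card (LinearMap.ker g)) := by
        gcongr with f _ i _
        refine (card_preimage_translate_le g (x i) (T f)).trans ?_
        gcongr
        refine (card_span_range_le _).trans_eq ?_
        simp [hJ]
      _ = _ := by
        rw [Finset.prod_const, Finset.sum_const, Finset.card_univ, Finset.card_univ,
          Fintype.card_fun, Fintype.card_subtype_compl]
        simp [hJ]
  have hcov : (Finset.univ.filter fun B : Fin n → V =>
      Module.finrank F (Submodule.span F (Set.range fun i => g (B i) - x i)) = t) ⊆
      (Finset.powersetCard t Finset.univ).biUnion S := by
    intro B hB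
    obtain ⟨J, hJ, hJs⟩ := exists_finset_forall_mem_span (F := F) fun i => g (B i) - x i
    rw [Finset.mem_biUnion]
    refine ⟨J, Finset.mem_powersetCard.2 ⟨Finset.subset_univ _, hJ.trans (Finset.mem_filter.1 hB).2⟩,
      Finset.mem_filter.2 ⟨Finset.mem_univ _, fun i => hJs i⟩⟩
  calc _ = (Finset.univ.filter fun B : Fin n → V =>
      Module.finrank F (Submodule.span F (Set.range fun i => g (B i) - x i)) = t).card := by
        rw [Nat.card_eq_fintype_card, Fintype.card_subtype]
    _ ≤ _ := Finset.card_le_card hcov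
    _ ≤ _ := Finset.card_biUnion_le_card_mul _ _ _ hS
    _ ≤ _ := by
      gcongr
      refine (Finset.card_le_card (Finset.subset_univ _)).trans_eq ?_
      simp

end LinearAlgebra

section MatrixCounting

variable {F : Type} [Field F]

lemma rank_eq_finrank_span_range {n m : ℕ} (W : Matrix (Fin n) (Fin m) F) :
    W.rank = Module.finrank F (Submodule.span F (Set.range fun i => W i)) :=
  W.rank_eq_finrank_span_row

variable [Fintype F]

lemma pow_mul_le_two_pow_mul_prod {q : ℕ} (hq : 2 ≤ q) {t m : ℕ} (ht : t ≤ m) :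
    q ^ (m * t) ≤ 2 ^ t * ∏ i : Fin t, (q ^ m - q ^ (i : ℕ)) := by
  calc q ^ (m * t) = ∏ _i : Fin t, q ^ m := by simp [pow_mul]
    _ ≤ ∏ i : Fin t, 2 * (q ^ m - q ^ (i : ℕ)) := by
      refine Finset.prod_le_prod' fun i _ => ?_
      have h1 : q ^ (i : ℕ) * 2 ≤ q ^ m :=
        calc q ^ (i : ℕ) * 2 ≤ q ^ (i : ℕ) * q := by gcongr
          _ = q ^ (i + 1 : ℕ) := (pow_succ _ _).symm
          _ ≤ q ^ m := Nat.pow_le_pow_right (by omega) (by omega)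
      omega
    _ = _ := by simp [Finset.prod_mul_distrib]

lemma pow_le_two_pow_mul_card_GL (n : ℕ) :
    Fintype.card F ^ (n * n) ≤ 2 ^ n * Nat.card (Matrix.GeneralLinearGroup (Fin n) F) := by
  rw [Matrix.card_GL_field]
  exact pow_mul_le_two_pow_mul_prod Fintype.one_lt_card le_rfl

lemma card_rank_eq_le (n m r : ℕ) :
    Nat.card {W : Matrix (Fin n) (Fin m) F // W.rank = r} ≤
      2 ^ n * ((Fintype.card F ^ m) ^ r * (Fintype.card F ^ r) ^ (n - r)) := by
  have h := card_finrank_span_eq_le (F := F) (LinearMap.id (M := Fin m → F))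
    (n := n) (fun _ => 0) r
  simp only [LinearMap.id_apply, LinearMap.ker_id, Nat.card_unique, mul_one] at h
  refine le_trans (le_of_eq ?_) (h.trans (le_of_eq ?_))
  · refine Nat.card_congr (Equiv.subtypeEquivRight fun W => ?_)
    have h0 : (fun i => W i - 0) = fun i => W i := funext fun i => sub_zero (W i)
    rw [rank_eq_finrank_span_range]
    exact iff_of_eq (congrArg (fun f : Fin n → Fin m → F =>
      Module.finrank F (Submodule.span F (Set.range f)) = r) h0.symm)
  · simp

lemma card_rank_mul_sub_eq_le {n m : ℕ} (X Y : Matrix (Fin n) (Fin m) F) (t : ℕ) :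
    Nat.card {B : Matrix (Fin n) (Fin n) F // (B * Y - X).rank = t} ≤
      2 ^ n * ((Fintype.card F ^ n) ^ t *
        (Fintype.card F ^ t * Fintype.card F ^ (n - Y.rank)) ^ (n - t)) := by
  have h := card_finrank_span_eq_le (F := F) Y.vecMulLinear (fun i => X i) t
  have hrange : Module.finrank F (LinearMap.range Y.vecMulLinear) = Y.rank := by
    rw [range_vecMulLinear, Matrix.rank_eq_finrank_span_row]
  have hker : Nat.card (LinearMap.ker Y.vecMulLinear) = Fintype.card F ^ (n - Y.rank) := by
    rw [Module.natCard_eq_pow_finrank (K := F), Nat.card_eq_fintype_card (α := F)]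
    have := LinearMap.finrank_range_add_finrank_ker Y.vecMulLinear
    rw [Module.finrank_fintype_fun_eq_card, Fintype.card_fin] at this
    congr 1
    omega
  rw [hker] at h
  refine le_trans (le_of_eq ?_) (h.trans (le_of_eq ?_))
  · refine Nat.card_congr (Equiv.subtypeEquivRight fun B => ?_)
    rw [rank_eq_finrank_span_range]
    rfl
  · simp

lemma le_card_rank_eq {n m t : ℕ} (htn : t ≤ n) (htm : t ≤ m) :
    Fintype.card F ^ (m * t) * Fintype.card F ^ (t * (n - t)) ≤
      2 ^ t * Nat.card {W : Matrix (Fin n) (Fin m) F // W.rank = t} := by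
  obtain ⟨d, rfl⟩ := Nat.exists_eq_add_of_le htn
  have h1 := pow_mul_le_two_pow_mul_prod (q := Fintype.card F) Fintype.one_lt_card htm
  have h2 := card_linearIndependent (K := F) (V := Fin m → F) (k := t) (by simpa using htm)
  rw [Module.finrank_fintype_fun_eq_card, Fintype.card_fin] at h2
  rw [← h2] at h1
  have h3 : Nat.card ({s : Fin t → Fin m → F // LinearIndependent F s} × (Fin d → Fin t → F)) ≤
      Nat.card {W : Matrix (Fin (t + d)) (Fin m) F // W.rank = t} := by
    refine Nat.card_le_card_of_injective (fun p => ⟨Matrix.of (Fin.append p.1.1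
      (fun i => ∑ j, p.2 i j • p.1.1 j)), ?_⟩) ?_
    · rw [rank_eq_finrank_span_range]
      have h4 : Submodule.span F (Set.range (Fin.append p.1.1
          (fun i => ∑ j, p.2 i j • p.1.1 j))) = Submodule.span F (Set.range p.1.1) := by
        apply le_antisymm
        · rw [Submodule.span_le]
          rintro _ ⟨i, rfl⟩
          refine Fin.addCases (fun i => ?_) (fun i => ?_) i
          · rw [Fin.append_left]; exact Submodule.subset_span ⟨i, rfl⟩
          · rw [Fin.append_right]
            exact Submodule.sum_mem _ fun j _ =>
              Submodule.smul_mem _ _ (Submodule.subset_span ⟨j, rfl⟩)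
        · apply Submodule.span_mono
          rintro _ ⟨i, rfl⟩
          exact ⟨Fin.castAdd d i, Fin.append_left _ _ _⟩
      refine (congrArg (fun S : Submodule F (Fin m → F) => Module.finrank F S) h4).trans ?_
      rw [finrank_span_eq_card p.1.2, Fintype.card_fin]
    · rintro ⟨⟨s, hs⟩, Z⟩ ⟨⟨s', hs'⟩, Z'⟩ h
      have h5 : Fin.append s (fun i => ∑ j, Z i j • s j) =
          Fin.append s' (fun i => ∑ j, Z' i j • s' j) := congrArg Subtype.val h
      have h6 : s = s' := by
        funext i
        simpa using congrFun h5 (Fin.castAdd d i)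
      subst h6
      have h7 : Z = Z' := by
        funext i
        have h8 := congrFun h5 (Fin.natAdd t i)
        simp only [Fin.append_right] at h8
        exact (linearIndependent_iff_injective_fintypeLinearCombination.1 hs) (by
          simpa [Fintype.linearCombination_apply] using h8)
      rw [h7]
  rw [Nat.card_prod] at h3
  have h9 : Nat.card (Fin d → Fin t → F) = Fintype.card F ^ (t * d) := by
    simp [pow_mul]
  rw [h9] at h3
  rw [Nat.add_sub_cancel_left]
  calc _ ≤ 2 ^ t * Nat.card {s : Fin t → Fin m → F // LinearIndependent F s} *
        Fintype.card F ^ (t * d) := by gcongr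
    _ ≤ _ := by rw [mul_assoc]; gcongr

lemma card_forall_lt_eq_zero {V : Type*} [Zero V] [Finite V] {n v : ℕ} (hv : v ≤ n) :
    Nat.card {f : Fin n → V // ∀ i : Fin n, (i : ℕ) < v → f i = 0} = Nat.card V ^ (n - v) := by
  obtain ⟨d, rfl⟩ := Nat.exists_eq_add_of_le hv
  let e : {f : Fin (v + d) → V // ∀ i : Fin (v + d), (i : ℕ) < v → f i = 0} ≃ (Fin d → V) :=
    { toFun := fun f i => f.1 (Fin.natAdd v i)
      invFun := fun g => ⟨Fin.append 0 g, fun i hi => by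
        have : i = Fin.castAdd d ⟨i, hi⟩ := rfl
        rw [this, Fin.append_left]; rfl⟩
      left_inv := by
        rintro ⟨f, hf⟩
        refine Subtype.ext (funext fun i => ?_)
        refine Fin.addCases (fun i => ?_) (fun i => ?_) i
        · simpa using (hf (Fin.castAdd d i) (by simp)).symm
        · simp
      right_inv := fun g => by funext i; simp }
  rw [Nat.card_congr e, Nat.card_fun, Nat.card_fin, Nat.add_sub_cancel_left]

end MatrixCounting

section RankDeficiency

open Matrix

variable {F : Type} [Field F]

lemma exists_eq_mul_of_mulVec_eq_zero {n m : ℕ} (P W : Matrix (Fin n) (Fin m) F)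
    (h : ∀ u, P *ᵥ u = 0 → W *ᵥ u = 0) : ∃ C : Matrix (Fin n) (Fin n) F, C * P = W := by
  obtain ⟨c, hc⟩ := exists_comp_eq_of_ker_le_ker P.mulVecLin W.mulVecLin (fun u hu => h u hu)
  refine ⟨LinearMap.toMatrix' c, ?_⟩
  apply Matrix.toLin'.injective
  rw [Matrix.toLin'_mul, Matrix.toLin'_toMatrix']
  exact hc

variable [Fintype F]

open Classical in
lemma card_rank_eq_and_mem_range_eq {n m : ℕ} (t : ℕ) {c d : Fin n → F} (hc : c ≠ 0)
    (hd : d ≠ 0) :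
    (Finset.univ.filter fun W : Matrix (Fin n) (Fin m) F =>
        W.rank = t ∧ ∃ u, W *ᵥ u = c).card =
      (Finset.univ.filter fun W : Matrix (Fin n) (Fin m) F =>
        W.rank = t ∧ ∃ u, W *ᵥ u = d).card := by
  have key : ∀ {c d : Fin n → F}, c ≠ 0 → d ≠ 0 →
      (Finset.univ.filter fun W : Matrix (Fin n) (Fin m) F =>
        W.rank = t ∧ ∃ u, W *ᵥ u = c).card ≤
      (Finset.univ.filter fun W : Matrix (Fin n) (Fin m) F =>
        W.rank = t ∧ ∃ u, W *ᵥ u = d).card := by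
    intro c d hc hd
    obtain ⟨e, he⟩ := exists_linearEquiv_apply_eq (F := F) hc hd
    set G := LinearMap.toMatrix' e.toLinearMap with hG
    have hGu : IsUnit G.det := by
      rw [hG, LinearMap.det_toMatrix']
      exact LinearEquiv.isUnit_det' e
    have hGc : G *ᵥ c = d := by
      rw [hG, LinearMap.toMatrix'_mulVec]; exact he
    refine Finset.card_le_card_of_injOn (fun W => G * W) ?_ ?_
    · intro W hW
      simp only [Finset.coe_filter, Finset.mem_univ, true_and, Set.mem_ofPred_eq] at hW ⊢
      obtain ⟨hW, u, hu⟩ := hW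
      refine ⟨?_, u, ?_⟩
      · rw [Matrix.rank_mul_eq_right_of_isUnit_det G W hGu, hW]
      · rw [← Matrix.mulVec_mulVec, hu, hGc]
    · intro W _ W' _ h
      have := Matrix.invertibleOfIsUnitDet G hGu
      exact Matrix.mul_right_injective_of_invertible G h
  exact le_antisymm (key hc hd) (key hd hc)

open Classical in
lemma card_ne_zero_mem_range {n m : ℕ} (W : Matrix (Fin n) (Fin m) F) :
    ((Finset.univ.filter fun c : Fin n → F => c ≠ 0).filter fun c => ∃ u, W *ᵥ u = c).card =
      Fintype.card F ^ W.rank - 1 := by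
  have h1 : (Finset.univ.filter fun c : Fin n → F => ∃ u, W *ᵥ u = c).card =
      Fintype.card F ^ W.rank := by
    rw [Matrix.rank, ← Nat.card_eq_fintype_card (α := F), ← Module.natCard_eq_pow_finrank,
      ← Fintype.card_subtype, ← Nat.card_eq_fintype_card]
    rfl
  rw [← h1, Finset.filter_comm, ← Finset.card_erase_of_mem (a := (0 : Fin n → F))]
  · congr 1
    ext c
    simp [and_comm]
  · simp only [Finset.mem_filter, Finset.mem_univ, true_and]
    exact ⟨0, Matrix.mulVec_zero W⟩

open Classical in
lemma card_ne_zero_forall_lt {n v : ℕ} (hv : v ≤ n) :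
    ((Finset.univ.filter fun c : Fin n → F => c ≠ 0).filter
      fun c => ∀ i : Fin n, (i : ℕ) < v → c i = 0).card = Fintype.card F ^ (n - v) - 1 := by
  have h1 := card_forall_lt_eq_zero (V := F) hv
  rw [Nat.card_eq_fintype_card, Nat.card_eq_fintype_card, Fintype.card_subtype] at h1
  rw [← h1, Finset.filter_comm, ← Finset.card_erase_of_mem (a := (0 : Fin n → F))]
  · congr 1
    ext c
    simp [and_comm]
  · simp

/-- The matrices of rank `t` whose rank drops when all rows but the first `v` are deleted. -/
def rankDropSet (F : Type) [Field F] (n m t v : ℕ) : Set (Matrix (Fin n) (Fin m) F) :=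
  {W | W.rank = t ∧ ∃ u, (∀ i : Fin n, (i : ℕ) < v → (W *ᵥ u) i = 0) ∧ W *ᵥ u ≠ 0}

lemma card_rankDropSet_mul_le {n m t v : ℕ} (hn : 0 < n) (hv : v ≤ n) :
    Nat.card (rankDropSet F n m t v) * (Fintype.card F - 1) * Fintype.card F ^ v ≤
      Fintype.card F ^ t * Nat.card {W : Matrix (Fin n) (Fin m) F // W.rank = t} := by
  classical
  set q := Fintype.card F with hq
  have hq2 : 1 < q := Fintype.one_lt_card
  let T : Finset (Matrix (Fin n) (Fin m) F) := Finset.univ.filter fun W => W.rank = t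
  let D : Finset (Fin n → F) := Finset.univ.filter fun c => c ≠ 0
  let E : Finset (Fin n → F) := D.filter fun c => ∀ i : Fin n, (i : ℕ) < v → c i = 0
  let r : Matrix (Fin n) (Fin m) F → (Fin n → F) → Prop := fun W c => ∃ u, W *ᵥ u = c
  let L : Finset (Matrix (Fin n) (Fin m) F) := Finset.univ.filter fun W => W ∈ rankDropSet F n m t v
  have hT : Nat.card {W : Matrix (Fin n) (Fin m) F // W.rank = t} = T.card := by
    rw [Nat.card_eq_fintype_card, Fintype.card_subtype]
  have hL : Nat.card (rankDropSet F n m t v) = L.card := by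
    rw [Nat.card_eq_fintype_card, ← Fintype.card_subtype]
  rw [hT, hL]
  have hE : E.card = q ^ (n - v) - 1 := card_ne_zero_forall_lt hv
  have hD : D.card = q ^ n - 1 := by
    have := card_ne_zero_forall_lt (F := F) (Nat.zero_le n)
    simpa using this
  obtain ⟨N, hN⟩ : ∃ N, ∀ c ∈ D, (Finset.bipartiteBelow r T c).card = N := by
    have : NeZero n := ⟨hn.ne'⟩
    refine ⟨(T.filter fun W => r W (fun _ => 1)).card, fun c hc => ?_⟩
    have hc : c ≠ 0 := by simpa [D] using hc
    simp only [Finset.bipartiteBelow, r, T, Finset.filter_filter]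
    exact card_rank_eq_and_mem_range_eq t hc (fun h => one_ne_zero (congrFun h 0))
  have h1 : T.card * (q ^ t - 1) = (q ^ n - 1) * N := by
    have h := Finset.sum_card_bipartiteAbove_eq_sum_card_bipartiteBelow r (s := T) (t := D)
    rw [Finset.sum_congr rfl (g := fun _ => q ^ t - 1), Finset.sum_congr (s₁ := D) rfl hN] at h
    · simpa [hD] using h
    · intro W hW
      have hW : W.rank = t := by simpa [T] using hW
      rw [← hW]
      exact card_ne_zero_mem_range W
  have h2 : L.card * (q - 1) ≤ (q ^ (n - v) - 1) * N := by
    rw [← hE]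
    refine Finset.card_mul_le_card_mul r (fun W hW => ?_) (fun c hc => ?_)
    · obtain ⟨hW, u, hu, hu0⟩ : W ∈ rankDropSet F n m t v := by simpa [L] using hW
      have h3 : (Finset.univ.filter fun a : F => a ≠ 0).card = q - 1 := by
        rw [Finset.filter_ne', Finset.card_erase_of_mem (Finset.mem_univ _), Finset.card_univ]
      rw [← h3]
      refine Finset.card_le_card_of_injOn (fun a => a • (W *ᵥ u)) ?_ ?_
      · intro a ha
        have ha : a ≠ 0 := by simpa using ha
        simp only [Finset.bipartiteAbove, E, D, Finset.coe_filter, Finset.mem_filter,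
          Finset.mem_univ, true_and, Set.mem_ofPred_eq]
        refine ⟨⟨smul_ne_zero ha hu0, fun i hi => ?_⟩, a • u, Matrix.mulVec_smul _ _ _⟩
        rw [Pi.smul_apply, hu i hi, smul_zero]
      · intro a _ b _ h
        exact smul_left_injective F hu0 h
    · rw [← hN c (Finset.mem_filter.1 hc).1]
      refine Finset.card_le_card fun W hW => ?_
      simp only [Finset.bipartiteBelow, Finset.mem_filter, L, T, Finset.mem_univ, true_and]
        at hW ⊢
      exact ⟨hW.1.1, hW.2⟩
  have h4 : (q ^ (n - v) - 1) * q ^ v ≤ q ^ n - 1 := by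
    rw [Nat.sub_mul, ← pow_add, Nat.sub_add_cancel hv, one_mul]
    exact Nat.sub_le_sub_left (Nat.one_le_pow _ _ (by omega)) _
  have h5 : 0 < q ^ n - 1 := Nat.sub_pos_of_lt (Nat.one_lt_pow hn.ne' hq2)
  calc L.card * (q - 1) * q ^ v ≤ (q ^ (n - v) - 1) * N * q ^ v := by gcongr
    _ = (q ^ (n - v) - 1) * q ^ v * N := by ring
    _ ≤ (q ^ n - 1) * N := by gcongr
    _ = T.card * (q ^ t - 1) := h1.symm
    _ ≤ T.card * q ^ t := by gcongr; exact Nat.sub_le _ _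
    _ = _ := mul_comm _ _

end RankDeficiency

section Channel

open Matrix

variable {F : Type} [Field F] {n m t : ℕ}

/-- The rows of `X` of index less than `v` vanish and the row space of `X` lies in that of `Y`. -/
def IsTrapped (v : ℕ) (X Y : Matrix (Fin n) (Fin m) F) : Prop :=
  ∃ B : Matrix (Fin n) (Fin n) F, (∀ i : Fin n, (i : ℕ) < v → B i = 0) ∧ B * Y = X

lemma isTrapped_of_notMem_rankDropSet {v : ℕ} {X W : Matrix (Fin n) (Fin m) F}
    (hX : ∀ i : Fin n, (i : ℕ) < v → X i = 0) (ht : W.rank = t) (hW : W ∉ rankDropSet F n m t v)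
    (A : Matrix.GeneralLinearGroup (Fin n) F) :
    IsTrapped v X ((A : Matrix (Fin n) (Fin n) F) * (X + W)) := by
  let d : Fin n → F := fun i => if (i : ℕ) < v then 1 else 0
  let P : Matrix (Fin n) (Fin n) F := Matrix.diagonal d
  obtain ⟨C, hC⟩ := exists_eq_mul_of_mulVec_eq_zero (P * W) W (fun u hu => by
    by_contra hne
    refine hW ⟨ht, u, fun i hi => ?_, hne⟩
    rw [← Matrix.mulVec_mulVec] at hu
    simpa [P, d, Matrix.mulVec_diagonal, hi] using congrFun hu i)
  have hPX : P * X = 0 := by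
    ext i j
    rw [Matrix.diagonal_mul]
    by_cases hi : (i : ℕ) < v
    · simp [congrFun (hX i hi) j]
    · simp [d, hi]
  refine ⟨(1 - P) * (1 - C * P) *
    ((A⁻¹ : Matrix.GeneralLinearGroup (Fin n) F) : Matrix (Fin n) (Fin n) F), fun i hi => ?_, ?_⟩
  · have h1 : (1 : Matrix (Fin n) (Fin n) F) - P = Matrix.diagonal (1 - d) := by
      rw [← Matrix.diagonal_one, Matrix.diagonal_sub]; rfl
    funext j
    rw [h1, Matrix.mul_assoc, Matrix.diagonal_mul]
    simp [d, hi]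
  · rw [← Matrix.mul_assoc, Matrix.mul_assoc _ _ (A : Matrix (Fin n) (Fin n) F), ← Units.val_mul,
      inv_mul_cancel, Units.val_one, Matrix.mul_one, Matrix.mul_assoc]
    have h2 : (1 - C * P) * (X + W) = X := by
      rw [Matrix.sub_mul, Matrix.one_mul, Matrix.mul_assoc, Matrix.mul_add, hPX, zero_add, hC,
        add_sub_cancel_right]
    rw [h2, Matrix.sub_mul, Matrix.one_mul, hPX, sub_zero]

variable [Fintype F]

lemma card_rank_eq_pos (htn : t ≤ n) (htm : t ≤ m) :
    0 < Nat.card {W : Matrix (Fin n) (Fin m) F // W.rank = t} := by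
  have h := le_card_rank_eq (F := F) htn htm
  have hq : 0 < Fintype.card F := Fintype.card_pos
  exact Nat.pos_of_mul_pos_left (lt_of_lt_of_le (by positivity) h)

lemma ammcKernel_nonneg (X Y : Matrix (Fin n) (Fin m) F) : 0 ≤ ammcKernel F n m t X Y := by
  unfold ammcKernel; positivity

open Classical in
lemma sum_ite_ammcKernel (X : Matrix (Fin n) (Fin m) F) (P : Matrix (Fin n) (Fin m) F → Prop) :
    ∑ Y, (if P Y then ammcKernel F n m t X Y else 0) =
      (Nat.card {p : Matrix.GeneralLinearGroup (Fin n) F ×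
        {W : Matrix (Fin n) (Fin m) F // W.rank = t} //
          P ((p.1 : Matrix (Fin n) (Fin n) F) * (X + (p.2 : Matrix (Fin n) (Fin m) F)))} : ℝ) /
      ((Nat.card (Matrix.GeneralLinearGroup (Fin n) F) : ℝ) *
        (Nat.card {W : Matrix (Fin n) (Fin m) F // W.rank = t} : ℝ)) := by
  rw [← Finset.sum_filter]
  unfold ammcKernel
  rw [← Finset.sum_div]
  congr 1
  rw [← Nat.cast_sum]
  congr 1
  simp_rw [Nat.card_eq_fintype_card, Fintype.card_subtype]
  rw [Finset.card_eq_sum_card_fiberwise (f := fun p : Matrix.GeneralLinearGroup (Fin n) F ×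
        {W : Matrix (Fin n) (Fin m) F // W.rank = t} =>
        (p.1 : Matrix (Fin n) (Fin n) F) * (X + (p.2 : Matrix (Fin n) (Fin m) F)))
        (t := Finset.univ.filter P)]
  · refine Finset.sum_congr rfl fun Y hY => ?_
    rw [Finset.filter_filter]
    congr 1
    ext p
    simp only [Finset.mem_filter, Finset.mem_univ, true_and] at hY ⊢
    exact ⟨fun h => ⟨h ▸ hY, h⟩, fun h => h.2⟩
  · intro p hp
    simpa using hp

lemma sum_ammcKernel (htn : t ≤ n) (htm : t ≤ m) (X : Matrix (Fin n) (Fin m) F) :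
    ∑ Y, ammcKernel F n m t X Y = 1 := by
  have h := sum_ite_ammcKernel (t := t) X fun _ => True
  simp only [if_true] at h
  rw [h, Nat.card_congr (Equiv.subtypeUnivEquiv fun _ => trivial), Nat.card_prod, Nat.cast_mul]
  apply div_self
  have := card_rank_eq_pos (F := F) htn htm
  have h2 : 0 < Nat.card (Matrix.GeneralLinearGroup (Fin n) F) := Nat.card_pos
  positivity

lemma card_ammc_fiber_le (X Y : Matrix (Fin n) (Fin m) F) :
    Nat.card {p : Matrix.GeneralLinearGroup (Fin n) F ×
        {W : Matrix (Fin n) (Fin m) F // W.rank = t} //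
      (p.1 : Matrix (Fin n) (Fin n) F) * (X + (p.2 : Matrix (Fin n) (Fin m) F)) = Y} ≤
    Nat.card {B : Matrix (Fin n) (Fin n) F // (B * Y - X).rank = t} := by
  have key : ∀ (A : Matrix.GeneralLinearGroup (Fin n) F) (W : Matrix (Fin n) (Fin m) F),
      (A : Matrix (Fin n) (Fin n) F) * (X + W) = Y →
      ((A⁻¹ : Matrix.GeneralLinearGroup (Fin n) F) : Matrix (Fin n) (Fin n) F) * Y - X = W := by
    rintro A W rfl
    rw [← Matrix.mul_assoc, ← Units.val_mul, inv_mul_cancel, Units.val_one, Matrix.one_mul,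
      add_sub_cancel_left]
  refine Nat.card_le_card_of_injective (fun p =>
    ⟨((p.1.1⁻¹ : Matrix.GeneralLinearGroup (Fin n) F) : Matrix (Fin n) (Fin n) F), ?_⟩) ?_
  · rw [key _ _ p.2]; exact p.1.2.2
  · rintro ⟨⟨A, W⟩, h⟩ ⟨⟨A', W'⟩, h'⟩ hAA
    have hA : A = A' := inv_injective (Units.ext (congrArg Subtype.val hAA))
    subst hA
    have hW : W = W' := Subtype.ext ((key _ _ h).symm.trans (key _ _ h'))
    subst hW
    rfl

lemma ammcKernel_le (hnm : 2 * n ≤ m) (ht : t ≤ n) (X Y : Matrix (Fin n) (Fin m) F) :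
    ammcKernel F n m t X Y ≤ (2 ^ (5 * n) * (Fintype.card F : ℝ) ^ ((m - n) * (n - t))) *
      (1 / ((n + 1) * (Nat.card {W : Matrix (Fin n) (Fin m) F // W.rank = Y.rank} : ℝ))) := by
  set q := Fintype.card F with hq
  have hr : Y.rank ≤ n := Y.rank_le_height
  have hk := (card_ammc_fiber_le (t := t) X Y).trans (card_rank_mul_sub_eq_le X Y t)
  have hN := card_rank_eq_le (F := F) n m Y.rank
  have hg := pow_le_two_pow_mul_card_GL (F := F) n
  have hT := le_card_rank_eq (F := F) ht (show t ≤ m by omega)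
  have hT0 := card_rank_eq_pos (F := F) ht (show t ≤ m by omega)
  have hg0 : 0 < Nat.card (Matrix.GeneralLinearGroup (Fin n) F) := Nat.card_pos
  have hN0 : 0 < Nat.card {W : Matrix (Fin n) (Fin m) F // W.rank = Y.rank} :=
    card_rank_eq_pos hr (by omega)
  unfold ammcKernel
  rw [mul_one_div, div_le_div_iff₀ (by positivity) (by positivity)]
  set k := Nat.card {p : Matrix.GeneralLinearGroup (Fin n) F ×
        {W : Matrix (Fin n) (Fin m) F // W.rank = t} //
      (p.1 : Matrix (Fin n) (Fin n) F) * (X + (p.2 : Matrix (Fin n) (Fin m) F)) = Y}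
  set N := Nat.card {W : Matrix (Fin n) (Fin m) F // W.rank = Y.rank}
  set T := Nat.card {W : Matrix (Fin n) (Fin m) F // W.rank = t}
  set g := Nat.card (Matrix.GeneralLinearGroup (Fin n) F)
  generalize Y.rank = r at *
  have hn1 : n + 1 ≤ 2 ^ n := Nat.lt_two_pow_self
  have hexp : n * t + (t + (n - r)) * (n - t) + (m * r + r * (n - r)) ≤
      (m - n) * (n - t) + (n * n + (m * t + t * (n - t))) := by
    obtain ⟨a, ha⟩ := Nat.exists_eq_add_of_le hr
    obtain ⟨c, rfl⟩ := Nat.exists_eq_add_of_le hnm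
    have h1 : n - r = a := by omega
    have h2 : 2 * n + c - n = n + c := by omega
    rw [h1, h2]
    obtain ⟨d, rfl⟩ := Nat.exists_eq_add_of_le ht
    rw [Nat.add_sub_cancel_left]
    have h3 : (r : ℤ) = t + d - a := by omega
    have h4 : (0 : ℤ) ≤ a * (a + c + t) := by positivity
    zify
    rw [h3]
    linarith
  have hmain : k * ((n + 1) * N) ≤ 2 ^ (5 * n) * q ^ ((m - n) * (n - t)) * (g * T) := by
    calc k * ((n + 1) * N) ≤ (2 ^ n * ((q ^ n) ^ t * (q ^ t * q ^ (n - r)) ^ (n - t))) *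
          (2 ^ n * (2 ^ n * ((q ^ m) ^ r * (q ^ r) ^ (n - r)))) := by gcongr
      _ = 2 ^ (3 * n) * q ^ (n * t + (t + (n - r)) * (n - t) + (m * r + r * (n - r))) := by ring
      _ ≤ 2 ^ (3 * n) * q ^ ((m - n) * (n - t) + (n * n + (m * t + t * (n - t)))) := by
        gcongr
        exact Fintype.card_pos
      _ = 2 ^ (3 * n) * q ^ ((m - n) * (n - t)) *
          (q ^ (n * n) * (q ^ (m * t) * q ^ (t * (n - t)))) := by ring
      _ ≤ 2 ^ (3 * n) * q ^ ((m - n) * (n - t)) * ((2 ^ n * g) * (2 ^ n * T)) := by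
        have hT' := hT.trans (Nat.mul_le_mul_right T (Nat.pow_le_pow_right two_pos ht))
        exact Nat.mul_le_mul_left _ (Nat.mul_le_mul hg hT')
      _ = _ := by ring
  exact_mod_cast hmain

lemma mutualInfoB_ammcKernel_le (hnm : 2 * n ≤ m) (ht : t ≤ n)
    {p : Matrix (Fin n) (Fin m) F → ℝ} (hp : ∀ X, 0 ≤ p X) (hp1 : ∑ X, p X = 1) :
    mutualInfoB (Fintype.card F) p (ammcKernel F n m t) ≤
      ((m : ℝ) - n) * ((n : ℝ) - t) + 5 * n * Real.logb (Fintype.card F) 2 := by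
  have hq1 : (1 : ℝ) < Fintype.card F := by exact_mod_cast Fintype.one_lt_card
  have hq0 : (0 : ℝ) < Fintype.card F := by linarith
  have h := mutualInfoB_le_logb hq1 hp hp1 (ammcKernel_nonneg (t := t))
    (sum_ammcKernel ht (by omega)) (Q := fun Y => 1 / ((n + 1) *
      (Nat.card {W : Matrix (Fin n) (Fin m) F // W.rank = Y.rank} : ℝ)))
    (fun Y => by positivity) ?_ (by positivity) (ammcKernel_le hnm ht)
  · refine h.trans_eq ?_
    rw [Real.logb_mul (by positivity) (by positivity), Real.logb_pow, Real.logb_pow,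
      Real.logb_self_eq_one hq1]
    push_cast [Nat.cast_sub ht, Nat.cast_sub (show n ≤ m by omega)]
    ring
  · classical
    rw [← Finset.sum_fiberwise_of_maps_to (s := Finset.univ) (t := Finset.range (n + 1))
      (g := fun Y : Matrix (Fin n) (Fin m) F => Y.rank)
      (fun Y _ => Finset.mem_range.2 (Nat.lt_succ_of_le Y.rank_le_height))]
    calc _ ≤ ∑ _r ∈ Finset.range (n + 1), (1 / (n + 1) : ℝ) := by
          refine Finset.sum_le_sum fun r _ => ?_
          rw [Finset.sum_congr rfl (g := fun _ => 1 / (((n : ℝ) + 1) *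
            (Nat.card {W : Matrix (Fin n) (Fin m) F // W.rank = r} : ℝ)))]
          · rw [Finset.sum_const, ← Fintype.card_subtype, ← Nat.card_eq_fintype_card, nsmul_eq_mul,
              ← div_div, mul_div_left_comm]
            exact mul_le_of_le_one_right (by positivity) (div_self_le_one _)
          · intro Y hY
            rw [(Finset.mem_filter.1 hY).2]
      _ = 1 := by
        rw [Finset.sum_const, Finset.card_range, nsmul_eq_mul]
        push_cast
        field_simp

open Classical in
lemma le_sum_ite_isTrapped {v : ℕ} (hn : 0 < n) (hv : v ≤ n) (htn : t ≤ n) (htm : t ≤ m)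
    {X : Matrix (Fin n) (Fin m) F} (hX : ∀ i : Fin n, (i : ℕ) < v → X i = 0) :
    1 - (Fintype.card F : ℝ) ^ t / (((Fintype.card F : ℝ) - 1) * (Fintype.card F : ℝ) ^ v) ≤
      ∑ Y, if IsTrapped v X Y then ammcKernel F n m t X Y else 0 := by
  rw [sum_ite_ammcKernel]
  have hT0 := card_rank_eq_pos (F := F) htn htm
  have hg0 : 0 < Nat.card (Matrix.GeneralLinearGroup (Fin n) F) := Nat.card_pos
  have hdrop := card_rankDropSet_mul_le (F := F) (m := m) (t := t) hn hv
  set q := Fintype.card F with hq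
  have hq1 : 1 < q := Fintype.one_lt_card
  have hq1' : (0 : ℝ) < q - 1 := by
    have : (1 : ℝ) < q := by exact_mod_cast hq1
    linarith
  have hcover : Nat.card (Matrix.GeneralLinearGroup (Fin n) F) *
      Nat.card {W : Matrix (Fin n) (Fin m) F // W.rank = t} ≤
      Nat.card {p : Matrix.GeneralLinearGroup (Fin n) F ×
        {W : Matrix (Fin n) (Fin m) F // W.rank = t} // IsTrapped v X
          ((p.1 : Matrix (Fin n) (Fin n) F) * (X + (p.2 : Matrix (Fin n) (Fin m) F)))} +
      Nat.card (Matrix.GeneralLinearGroup (Fin n) F) * Nat.card (rankDropSet F n m t v) := by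
    rw [← Nat.card_prod, ← Nat.card_prod, ← Nat.card_sum]
    refine Nat.card_le_card_of_injective (fun p =>
      if h : p.2.1 ∈ rankDropSet F n m t v then Sum.inr (p.1, ⟨p.2.1, h⟩)
      else Sum.inl ⟨p, isTrapped_of_notMem_rankDropSet hX p.2.2 h p.1⟩) ?_
    rintro ⟨A, W⟩ ⟨A', W'⟩ h
    dsimp only at h
    split_ifs at h with h1 h2 h2
    · simp only [Sum.inr.injEq, Prod.mk.injEq, Subtype.mk.injEq] at h
      exact Prod.ext h.1 (Subtype.ext h.2)
    · simpa using h
  set T := Nat.card {W : Matrix (Fin n) (Fin m) F // W.rank = t}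
  set g := Nat.card (Matrix.GeneralLinearGroup (Fin n) F)
  set L := Nat.card (rankDropSet F n m t v)
  have h1 : (L : ℝ) * (q - 1) * q ^ v ≤ q ^ t * T := by
    have : ((q - 1 : ℕ) : ℝ) = q - 1 := by rw [Nat.cast_sub hq1.le, Nat.cast_one]
    rw [← this]
    exact_mod_cast hdrop
  have h2 : (L : ℝ) / T ≤ q ^ t / ((q - 1) * q ^ v) := by
    rw [div_le_div_iff₀ (by positivity) (by positivity)]
    linarith
  rw [le_div_iff₀ (by positivity)]
  have h3 : (g : ℝ) * T * (L / T) = g * L := by field_simp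
  have h4 := mul_le_mul_of_nonneg_left h2 (show (0 : ℝ) ≤ g * T by positivity)
  rw [h3] at h4
  have h5 := (Nat.cast_le (α := ℝ)).2 hcover
  push_cast at h5
  linarith

end Channel

section Capacity

open Matrix

variable {F : Type} [Field F] [Fintype F] {n m t : ℕ}

lemma card_matrix_forall_lt_eq_zero (F : Type) [Field F] [Fintype F] (m : ℕ) {n v : ℕ}
    (hv : v ≤ n) :
    Nat.card {X : Matrix (Fin n) (Fin m) F // ∀ i : Fin n, (i : ℕ) < v → X i = 0} =
      Fintype.card F ^ (m * (n - v)) := by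
  refine (card_forall_lt_eq_zero (V := Fin m → F) hv).trans ?_
  rw [Nat.card_eq_fintype_card, Fintype.card_fun, Fintype.card_fin, ← pow_mul]

open Classical in
lemma sum_ite_forall_lt_eq_zero (F : Type) [Field F] [Fintype F] (m : ℕ) {n v : ℕ} (hv : v ≤ n) :
    ∑ X : Matrix (Fin n) (Fin m) F, (if ∀ i : Fin n, (i : ℕ) < v → X i = 0 then
      ((Fintype.card F : ℝ) ^ (m * (n - v)))⁻¹ else 0) = 1 := by
  have hq0 : (0 : ℝ) < Fintype.card F := by exact_mod_cast Fintype.card_pos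
  rw [← Finset.sum_filter, Finset.sum_const, nsmul_eq_mul, ← Fintype.card_subtype,
    ← Nat.card_eq_fintype_card, card_matrix_forall_lt_eq_zero F m hv]
  push_cast
  exact mul_inv_cancel₀ (by positivity)

open Classical in
lemma le_mutualInfoB_ammcKernel {v : ℕ} (hn : 0 < n) (hnm : n ≤ m) (ht : t ≤ n) (hv : v ≤ n) :
    (1 - (Fintype.card F : ℝ) ^ t / (((Fintype.card F : ℝ) - 1) * (Fintype.card F : ℝ) ^ v)) *
        (((m : ℝ) - n) * ((n : ℝ) - v)) - Real.logb (Fintype.card F) 2 ≤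
      mutualInfoB (Fintype.card F) (fun X : Matrix (Fin n) (Fin m) F =>
        if ∀ i : Fin n, (i : ℕ) < v → X i = 0 then
          ((Fintype.card F : ℝ) ^ (m * (n - v)))⁻¹ else 0) (ammcKernel F n m t) := by
  have hq1 : (1 : ℝ) < Fintype.card F := by exact_mod_cast Fintype.one_lt_card
  have hq0 : (0 : ℝ) < Fintype.card F := by linarith
  have hsum := sum_ite_forall_lt_eq_zero F m hv
  set q : ℝ := ((Fintype.card F : ℕ) : ℝ) with hq
  set p : Matrix (Fin n) (Fin m) F → ℝ := fun X =>
    if ∀ i : Fin n, (i : ℕ) < v → X i = 0 then (q ^ (m * (n - v)))⁻¹ else 0 with hpdef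
  have hp : ∀ X, 0 ≤ p X := fun X => by
    simp only [hpdef]; split_ifs <;> positivity
  have hpne : ∀ X, p X ≠ 0 → ∀ i : Fin n, (i : ℕ) < v → X i = 0 := fun X hX => by
    by_contra hne
    exact hX (if_neg hne)
  have hM : 1 ≤ q ^ ((m - n) * (n - v)) := one_le_pow₀ hq1.le
  let N : Matrix (Fin n) (Fin m) F → Matrix (Fin n) (Fin m) F → Finset (Matrix (Fin n) (Fin n) F) :=
    fun X Y => {B | (∀ i : Fin n, (i : ℕ) < v → B i = 0) ∧ B * Y = X}
  have hN : ∀ Y, ∑ X, (N X Y).card = Fintype.card F ^ (n * (n - v)) := by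
    intro Y
    rw [← card_matrix_forall_lt_eq_zero F n hv, Nat.card_eq_fintype_card, Fintype.card_subtype]
    refine Eq.trans ?_ (Finset.card_eq_sum_card_fiberwise
      (f := fun B : Matrix (Fin n) (Fin n) F => B * Y)
      (t := Finset.univ) (fun _ _ => Finset.mem_coe.2 (Finset.mem_univ _))).symm
    refine Finset.sum_congr rfl fun X _ => ?_
    rw [Finset.filter_filter]
  have h := le_mutualInfoB hq1 hp hsum (ammcKernel_nonneg (t := t))
    (sum_ammcKernel ht (ht.trans hnm))
    (V := fun X Y => p X / 2 + (N X Y).card / q ^ (n * (n - v)) / 2)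
    (fun Y => ?_) (IsTrapped v) hM (fun X Y => by simp only [le_add_iff_nonneg_right]; positivity)
    (fun X Y hXY hX => ?_)
    (fun X hX => le_sum_ite_isTrapped hn hv ht (ht.trans hnm) (hpne X hX))
  · rw [Real.logb_pow, Real.logb_self_eq_one hq1] at h
    push_cast [Nat.cast_sub hv, Nat.cast_sub hnm] at h
    simpa only [mul_one] using h
  · rw [Finset.sum_add_distrib, ← Finset.sum_div, hsum, ← Finset.sum_div, ← Finset.sum_div,
      ← Nat.cast_sum, hN]
    push_cast
    rw [div_self (by positivity)]
    norm_num
  · have hpX : p X = (q ^ (m * (n - v)))⁻¹ := if_pos (hpne X hX)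
    obtain ⟨B, hB⟩ := hXY
    have hc : (1 : ℝ) ≤ (N X Y).card := by
      exact_mod_cast Finset.card_pos.2 ⟨B, Finset.mem_filter.2 ⟨Finset.mem_univ _, hB⟩⟩
    have hMp : p X * q ^ ((m - n) * (n - v)) = 1 / q ^ (n * (n - v)) := by
      obtain ⟨c, rfl⟩ := Nat.exists_eq_add_of_le hnm
      rw [hpX, Nat.add_sub_cancel_left, add_mul, pow_add]
      field_simp
    rw [hMp]
    have h1 : 1 / q ^ (n * (n - v)) ≤ (N X Y).card / q ^ (n * (n - v)) := by gcongr
    have h2 := hp X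
    linarith

lemma ammcCapacity_le (hnm : 2 * n ≤ m) (ht : t ≤ n) :
    ammcCapacity F n m t ≤
      ((m : ℝ) - n) * ((n : ℝ) - t) + 5 * n * Real.logb (Fintype.card F) 2 := by
  classical
  refine csSup_le ⟨_, _, ?_, sum_ite_forall_lt_eq_zero F m ht, rfl⟩ ?_
  · intro X
    split_ifs <;> positivity
  · rintro _ ⟨p, hp, hp1, rfl⟩
    exact mutualInfoB_ammcKernel_le hnm ht hp hp1

lemma le_ammcCapacity {v : ℕ} (hn : 0 < n) (hnm : 2 * n ≤ m) (ht : t ≤ n) (hv : v ≤ n) :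
    (1 - (Fintype.card F : ℝ) ^ t / (((Fintype.card F : ℝ) - 1) * (Fintype.card F : ℝ) ^ v)) *
        (((m : ℝ) - n) * ((n : ℝ) - v)) - Real.logb (Fintype.card F) 2 ≤
      ammcCapacity F n m t := by
  classical
  refine (le_mutualInfoB_ammcKernel hn (by omega) ht hv).trans (le_csSup ?_
    ⟨_, fun X => ?_, sum_ite_forall_lt_eq_zero F m hv, rfl⟩)
  · refine ⟨((m : ℝ) - n) * ((n : ℝ) - t) + 5 * n * Real.logb (Fintype.card F) 2, ?_⟩
    rintro _ ⟨p, hp, hp1, rfl⟩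
    exact mutualInfoB_ammcKernel_le hnm ht hp hp1
  · split_ifs <;> positivity

lemma logb_card_two_le_one (F : Type) [Field F] [Fintype F] :
    Real.logb (Fintype.card F) 2 ≤ 1 := by
  have hq2 : (2 : ℝ) ≤ Fintype.card F := by exact_mod_cast Fintype.one_lt_card (α := F)
  rw [Real.logb_le_iff_le_rpow (by linarith) (by norm_num), Real.rpow_one]
  exact hq2

/-- The loss incurred by the input that is uniform on the matrices whose first
`min n (t + s)` rows vanish. -/
lemma sub_le_ammcCapacity (hn : 0 < n) (hnm : 2 * n ≤ m) (ht : t ≤ n) (s : ℕ) :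
    ((m : ℝ) - n) * ((n : ℝ) - t) - ((m : ℝ) - n) * (s + n * (1 / 2) ^ s) - 1 ≤
      ammcCapacity F n m t := by
  have hq2 : (2 : ℝ) ≤ Fintype.card F := by exact_mod_cast Fintype.one_lt_card (α := F)
  have hlog := logb_card_two_le_one F
  have h := le_ammcCapacity (F := F) hn hnm ht (min_le_left n (t + s))
  set q : ℝ := ((Fintype.card F : ℕ) : ℝ)
  have hnm' : (2 : ℝ) * n ≤ m := by exact_mod_cast hnm
  have hmn : (0 : ℝ) ≤ (m : ℝ) - n := by
    have : (0 : ℝ) ≤ n := n.cast_nonneg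
    linarith
  refine le_trans ?_ h
  rcases le_total n (t + s) with hle | hle
  · rw [min_eq_left hle, sub_self, mul_zero, mul_zero]
    have h1 : (n : ℝ) - t ≤ s + n * (1 / 2) ^ s := by
      have : (n : ℝ) ≤ t + s := by exact_mod_cast hle
      have : (0 : ℝ) ≤ n * (1 / 2) ^ s := by positivity
      linarith
    have := mul_le_mul_of_nonneg_left h1 hmn
    linarith
  · rw [min_eq_right hle]
    push_cast
    have hle' : (t : ℝ) + s ≤ n := by exact_mod_cast hle
    have hδ : q ^ t / ((q - 1) * q ^ (t + s)) ≤ (1 / 2) ^ s := by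
      have hq1 : 1 ≤ q - 1 := by linarith
      rw [one_div, inv_pow, ← one_div, div_le_div_iff₀ (by positivity) (by positivity), one_mul,
        pow_add]
      calc q ^ t * 2 ^ s ≤ q ^ t * q ^ s := by gcongr
        _ = 1 * (q ^ t * q ^ s) := (one_mul _).symm
        _ ≤ (q - 1) * (q ^ t * q ^ s) := by gcongr
    have h1 : q ^ t / ((q - 1) * q ^ (t + s)) * (n - (t + s)) ≤ n * (1 / 2) ^ s := by
      rw [mul_comm (n : ℝ)]
      gcongr
      linarith
    have := mul_le_mul_of_nonneg_left h1 hmn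
    linarith

open Filter Topology

lemma exists_abs_ammcCapacity_sub_lt (hn : 0 < n) (hnm : 2 * n ≤ m) (ht : t ≤ n) {ε : ℝ}
    (hε : 0 < ε) :
    ∃ Q : ℕ, ∀ (F : Type) [Field F] [Fintype F], Q < Fintype.card F →
      |ammcCapacity F n m t - ((m : ℝ) - n) * ((n : ℝ) - t)| < ε := by
  have hlog : Tendsto (fun q : ℕ => Real.logb q 2) atTop (𝓝 0) := by
    simp only [← Real.log_div_log]
    exact tendsto_const_nhds.div_atTop (Real.tendsto_log_atTop.comp tendsto_natCast_atTop_atTop)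
  have hinv : Tendsto (fun q : ℕ => 1 / ((q : ℝ) - 1)) atTop (𝓝 0) :=
    tendsto_const_nhds.div_atTop
      (tendsto_atTop_add_const_right _ (-1) tendsto_natCast_atTop_atTop)
  have hup : Tendsto (fun q : ℕ => 5 * n * Real.logb q 2) atTop (𝓝 0) := by
    simpa using hlog.const_mul (5 * n : ℝ)
  have hlow : Tendsto (fun q : ℕ => 1 / ((q : ℝ) - 1) * (((m : ℝ) - n) * ((n : ℝ) - t)) +
      Real.logb q 2) atTop (𝓝 0) := by
    simpa using (hinv.mul_const (((m : ℝ) - n) * ((n : ℝ) - t))).add hlog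
  obtain ⟨Q, hQ⟩ := eventually_atTop.1
    ((hup.eventually_lt_const hε).and (hlow.eventually_lt_const hε))
  refine ⟨Q, fun F _ _ hF => ?_⟩
  obtain ⟨h1, h2⟩ := hQ _ hF.le
  have hU := ammcCapacity_le (F := F) hnm ht
  have hL := le_ammcCapacity (F := F) hn hnm ht ht
  have hq0 : (Fintype.card F : ℝ) ^ t ≠ 0 := by
    have : 0 < Fintype.card F := Fintype.card_pos
    positivity
  rw [div_mul_cancel_right₀ hq0, ← one_div] at hL
  rw [abs_lt]
  constructor <;> linarith

lemma tendsto_ammcCapacity_div (F : Type) [Field F] [Fintype F] {a b c : ℕ} (ha : 0 < a)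
    (hab : 2 * a ≤ b) (hc : c ≤ a) :
    Tendsto (fun k : ℕ =>
        ammcCapacity F (a * k) (b * k) (c * k) / ((a * k : ℝ) * (b * k : ℝ))) atTop
      (𝓝 ((1 - (a : ℝ) / b) * (1 - (c : ℝ) / a))) := by
  have hlog := logb_card_two_le_one F
  have ha' : (0 : ℝ) < a := by exact_mod_cast ha
  have hb' : (0 : ℝ) < b := by exact_mod_cast (show 0 < b by omega)
  have hinv : Tendsto (fun k : ℕ => (k : ℝ)⁻¹) atTop (𝓝 0) := tendsto_inv_atTop_nhds_zero_nat
  have hsqrt : Tendsto Nat.sqrt atTop atTop :=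
    tendsto_atTop_mono' _ (Eventually.of_forall fun k => le_rfl)
      (tendsto_atTop.2 fun r => eventually_atTop.2 ⟨r * r, fun k hk => Nat.le_sqrt.2 hk⟩)
  have hs : Tendsto (fun k : ℕ => (Nat.sqrt k : ℝ) / k) atTop (𝓝 0) := by
    refine squeeze_zero (fun k => by positivity) (fun k => ?_)
      (tendsto_inv_atTop_zero.comp (tendsto_natCast_atTop_atTop.comp hsqrt))
    rcases Nat.eq_zero_or_pos k with rfl | hk
    · simp
    · have h1 : 0 < Nat.sqrt k := Nat.sqrt_pos.2 hk
      have h2 : (Nat.sqrt k : ℝ) * Nat.sqrt k ≤ k := by exact_mod_cast Nat.sqrt_le k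
      simp only [Function.comp_apply]
      rw [div_le_iff₀ (by positivity), inv_mul_eq_div, le_div_iff₀ (by positivity)]
      exact h2
  have hpow : Tendsto (fun k : ℕ => (1 / 2 : ℝ) ^ Nat.sqrt k) atTop (𝓝 0) :=
    (tendsto_pow_atTop_nhds_zero_of_lt_one (by norm_num) (by norm_num)).comp hsqrt
  set L : ℝ := (1 - (a : ℝ) / b) * (1 - (c : ℝ) / a) with hL
  have hupper : Tendsto (fun k : ℕ => L + 5 / b * (k : ℝ)⁻¹) atTop (𝓝 L) := by
    simpa using tendsto_const_nhds.add (hinv.const_mul (5 / b : ℝ))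
  have hlower : Tendsto (fun k : ℕ => L - (1 - (a : ℝ) / b) *
      (1 / a * ((Nat.sqrt k : ℝ) / k) + (1 / 2 : ℝ) ^ Nat.sqrt k) -
      1 / (a * b) * ((k : ℝ)⁻¹ * (k : ℝ)⁻¹)) atTop (𝓝 L) := by
    simpa using (tendsto_const_nhds.sub (((hs.const_mul (1 / a : ℝ)).add hpow).const_mul
      (1 - (a : ℝ) / b))).sub ((hinv.mul hinv).const_mul (1 / (a * b) : ℝ))
  refine tendsto_of_tendsto_of_tendsto_of_le_of_le' hlower hupper ?_ ?_
  all_goals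
    filter_upwards [eventually_gt_atTop 0] with k hk
    have hk' : (0 : ℝ) < k := by exact_mod_cast hk
    have hnm : 2 * (a * k) ≤ b * k := by nlinarith
    have hck : c * k ≤ a * k := Nat.mul_le_mul_right k hc
  · have h := sub_le_ammcCapacity (F := F) (Nat.mul_pos ha hk) hnm hck (Nat.sqrt k)
    rw [le_div_iff₀ (by positivity)]
    refine le_trans (le_of_eq ?_) h
    rw [hL]
    push_cast
    field_simp
  · have h := ammcCapacity_le (F := F) hnm hck
    rw [div_le_iff₀ (by positivity)]
    refine h.trans ?_
    have h1 := mul_le_mul_of_nonneg_left hlog (show (0 : ℝ) ≤ 5 * (a * k : ℕ) by positivity)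
    refine (add_le_add_right h1 _).trans (le_of_eq ?_)
    rw [hL]
    push_cast
    field_simp

end Capacity

/-- for `0 < λ = n/m ≤ 1/2` and `τ = t/n` fixed, the AMMC capacity satisfies
`lim_{q→∞} C = (m-n)(n-t)` (for fixed `n, m, t`), and, writing `λ = a/b`, `τ = c/a`,
`n = ak`, `m = bk`, `t = ck`, `lim_{k→∞} C/(nm) = (1-λ)(1-τ)`. -/
theorem stmt_18 :
    (∀ n m t : ℕ, 0 < n → 2 * n ≤ m → t ≤ n →
      ∀ ε > (0 : ℝ), ∃ Q : ℕ,
        ∀ (F : Type) [Field F] [Fintype F], Q < Fintype.card F →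
          |ammcCapacity F n m t - ((m : ℝ) - n) * ((n : ℝ) - t)| < ε) ∧
    (∀ (F : Type) [Field F] [Fintype F], ∀ a b c : ℕ, 0 < a → 2 * a ≤ b → c ≤ a →
      Filter.Tendsto
        (fun k : ℕ =>
          ammcCapacity F (a * k) (b * k) (c * k) / ((a * k : ℝ) * (b * k : ℝ)))
        Filter.atTop
        (nhds ((1 - (a : ℝ) / b) * (1 - (c : ℝ) / a)))) :=
  ⟨fun _ _ _ hn hnm ht _ hε => exists_abs_ammcCapacity_sub_lt hn hnm ht hε,
    fun F _ _ _ _ _ ha hab hc => tendsto_ammcCapacity_div F ha hab hc⟩
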